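/- Fix k ≥ 2 and s ≥ 1 with k ≥ 2s. For every prime p, the identity ∑_{𝐤 ∈ I_0(k,s)} H_p^⋆(𝐤) = (-1)^{k-1} ∑_{𝐤 ∈ I_0(k,s)} (-1)^{dep(𝐤)} H_p(𝐤) holds in ℤ/pℤ for all sufficiently large p (i.e., the corresponding elements of 𝒜 are equal). -/

import Mathlib

/-- Auxiliary strict truncated multiple harmonic sum. -/
def HAux (p : ℕ) : ℕ → List ℕ → ZMod p
  | _, [] => 1
  | N, k :: ks => ∑ m ∈ Finset.Ioo 0 N, ((m : ZMod p))⁻¹ ^ k * HAux p m ks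

/-- `H_p(k₁,…,k_r) = ∑_{p > m₁ > ⋯ > m_r > 0} ∏ᵢ mᵢ^{-kᵢ}` in `ℤ/pℤ`. -/
def Hp (p : ℕ) (ks : List ℕ) : ZMod p := HAux p p ks

/-- Auxiliary non-strict truncated multiple harmonic sum. -/
def HstarAux (p : ℕ) : ℕ → List ℕ → ZMod p
  | _, [] => 1
  | N, k :: ks => ∑ m ∈ Finset.Ioo 0 N, ((m : ZMod p))⁻¹ ^ k * HstarAux p (m + 1) ks

/-- `H_p^⋆(k₁,…,k_r) = ∑_{p > m₁ ≥ ⋯ ≥ m_r > 0} ∏ᵢ mᵢ^{-kᵢ}` in `ℤ/pℤ`. -/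
def Hps (p : ℕ) (ks : List ℕ) : ZMod p := HstarAux p p ks

/-- `I₀(k,s)`: indices `(k₁,…,k_r)` of positive integers (compositions of `k`)
with `k₁ > 1` and exactly `s` components greater than `1`. -/
def Izero (k s : ℕ) : Finset (Composition k) :=
  Finset.univ.filter fun c =>
    2 ≤ c.blocks.headI ∧ (c.blocks.filter fun x => 2 ≤ x).length = s

/-!
Weight an index `(k₁, …, k_r)` by `w'(k₁) w(k₂) ⋯ w(k_r)`, and for `m` prime to `p` put
`φ_m = ∑_{n ≥ 1} w(n) m⁻ⁿ Xⁿ` and `φ'_m = ∑_{n ≥ 1} w'(n) m⁻ⁿ Xⁿ`. Summing over the largest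
summation variable `m`, the weighted generating series of `H_p^⋆` and of `(-1)^{dep - 1} H_p` are
`S^⋆ = ∑_m φ'_m ∏_{j ≤ m} (1 - φ_j)⁻¹` and `S = ∑_m φ'_m ∏_{j < m} (1 - φ_j)`. Since
`φ_m(-X) = φ_{p - m}(X)`, the substitution `m ↦ p - m` gives `S(-X) = P(X) S^⋆(X)` with
`P = ∏_{0 < j < p} (1 - φ_j)`. Replacing `X` by `a X` with `a ∈ (ℤ/pℤ)ˣ` permutes the factors of
`P`, so `P ≡ 1` modulo `X^{p-1}`, and the coefficients of `S(-X)` and `S^⋆(X)` agree below degree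
`p - 1`. Weights that mark the components greater than `1` by a polynomial variable record the
height.
-/

noncomputable section

open Finset

theorem sum_composition_succ {M : Type*} [AddCommMonoid M] (n : ℕ) (f : List ℕ → M) :
    ∑ c : Composition (n + 1), f c.blocks =
      ∑ ij ∈ antidiagonal n, ∑ c : Composition ij.2, f ((ij.1 + 1) :: c.blocks) := by
  rw [sum_sigma']
  symm
  refine sum_bij (fun x hx => ⟨(x.1.1 + 1) :: x.2.blocks, ?pos, ?sum⟩) ?_ ?inj ?surj ?_
  case pos =>
    intro i hi
    obtain rfl | hi := List.mem_cons.1 hi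
    exacts [Nat.succ_pos _, x.2.blocks_pos hi]
  case sum =>
    have hx := HasAntidiagonal.mem_antidiagonal.1 (mem_sigma.1 hx).1
    rw [List.sum_cons, x.2.blocks_sum]
    lia
  case inj =>
    rintro ⟨⟨i, j⟩, c⟩ hc ⟨⟨i', j'⟩, d⟩ hd h
    simp only [mem_sigma, HasAntidiagonal.mem_antidiagonal, mem_univ, and_true] at hc hd
    obtain ⟨hi, hblocks⟩ := List.cons.inj (congrArg Composition.blocks h)
    obtain rfl : i = i' := Nat.succ_injective hi
    obtain rfl : j = j' := by lia
    obtain rfl : c = d := Composition.ext hblocks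
    rfl
  case surj =>
    rintro ⟨_ | ⟨a, l⟩, hpos, hsum⟩ -
    · simp at hsum
    · have ha : 0 < a := hpos List.mem_cons_self
      have hl : a + l.sum = n + 1 := by simpa using hsum
      refine ⟨⟨(a - 1, l.sum), ⟨l, fun hi => hpos (List.mem_cons_of_mem _ hi), rfl⟩⟩, ?_, ?_⟩
      · simp only [mem_sigma, HasAntidiagonal.mem_antidiagonal, mem_univ, and_true]
        lia
      · ext1
        simp only [Nat.sub_add_cancel ha]
  all_goals intros; simp

section Series

open PowerSeries

variable {R A : Type*} [CommRing R] [CommRing A] [Algebra R A]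

/-- The generating series `∑_𝐤 f(𝐤) X^{|𝐤|}` of a function of indices `𝐤` (lists of positive
integers) by weight. -/
def compositionSeries (f : List ℕ → A) : A⟦X⟧ :=
  mk fun n => ∑ c : Composition n, f c.blocks

/-- The series `∑_{n ≥ 1} w(n) xⁿ Xⁿ`: a single component `n` of weight `w(n)`, at the summation
variable with inverse `x`. -/
def partSeries (w : ℕ → A) (x : R) : A⟦X⟧ :=
  mk fun n => if n = 0 then 0 else x ^ n • w n

theorem compositionSeries_eq_C_add_sum {ι : Type*} {f : List ℕ → A} (S : Finset ι) (w : ℕ → A)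
    (x : ι → R) (g : ι → List ℕ → A)
    (hf : ∀ a l, f (a :: l) = ∑ i ∈ S, (x i ^ a • w a) * g i l) :
    compositionSeries f =
      C (f []) + ∑ i ∈ S, partSeries w (x i) * compositionSeries (g i) := by
  ext n
  rw [map_add, map_sum]
  cases n with
  | zero =>
    have hnil (c : Composition 0) : c.blocks = [] := c.blocks_eq_nil.2 rfl
    simp [compositionSeries, partSeries, hnil, composition_card]
  | succ n =>
    simp only [compositionSeries, partSeries, coeff_mk, coeff_C, coeff_mul, Nat.succ_ne_zero,
      Nat.sum_antidiagonal_succ, sum_composition_succ, hf, if_true, if_false, zero_mul,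
      sum_const_zero, zero_add, mul_sum]
    rw [← sum_comm]
    exact sum_congr rfl fun _ _ => sum_comm

theorem partSeries_neg (w : ℕ → A) (x : R) : partSeries (-w) x = -partSeries w x := by
  ext n
  simp only [partSeries, coeff_mk, Pi.neg_apply, smul_neg, map_neg]
  split_ifs <;> simp

theorem rescale_partSeries (a : R) (w : ℕ → A) (x : R) :
    rescale (algebraMap R A a) (partSeries w x) = partSeries w (a * x) := by
  ext n
  simp only [partSeries, coeff_rescale, coeff_mk, mul_ite, mul_zero, ← map_pow,
    ← Algebra.smul_def, smul_smul, mul_pow]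

theorem rescale_neg_one_partSeries (w : ℕ → A) (x : R) :
    rescale (-1) (partSeries w x) = partSeries w (-x) := by
  simpa using rescale_partSeries (-1) w x

/-- The weight `w'(k₁) w(k₂) ⋯ w(k_r)` of an index `(k₁, …, k_r)`; the empty index gets `0`. -/
def headWeight (w' w : ℕ → A) : List ℕ → A
  | [] => 0
  | a :: l => w' a * (l.map w).prod

theorem headWeight_neg (w' w : ℕ → A) (l : List ℕ) :
    headWeight (-w') (-w) l = (-1) ^ l.length * headWeight w' w l := by
  cases l with
  | nil => simp [headWeight]
  | cons a l =>
    have hprod : (l.map (-w)).prod = (-1) ^ l.length * (l.map w).prod := by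
      simpa only [List.map_map, List.length_map] using! List.prod_map_neg (l.map w)
    simp only [headWeight, hprod, Pi.neg_apply, List.length_cons]
    ring

end Series

section Harmonic

open PowerSeries

variable (p : ℕ) {A : Type*} [CommRing A] [Algebra (ZMod p) A]

/-- The generating series of the truncated sums `H_N(𝐤)` (variables `< N`, values in `ℤ/pℤ`), each
component `n` being weighted by `w(n)`. -/
def strictSeries (w : ℕ → A) (N : ℕ) : A⟦X⟧ :=
  compositionSeries fun l => HAux p N l • (l.map w).prod

/-- The generating series of the truncated sums `H_N^⋆(𝐤)` (variables `< N`, values in `ℤ/pℤ`),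
each component `n` being weighted by `w(n)`. -/
def starSeries (w : ℕ → A) (N : ℕ) : A⟦X⟧ :=
  compositionSeries fun l => HstarAux p N l • (l.map w).prod

variable {p}

theorem HAux_cons_smul (N a : ℕ) (l : List ℕ) (u v : A) :
    HAux p N (a :: l) • (u * v) =
      ∑ m ∈ Ico 1 N, ((m : ZMod p)⁻¹ ^ a • u) * (HAux p m l • v) := by
  simp only [HAux, sum_smul, smul_mul_smul_comm, ← Ico_add_one_left_eq_Ioo, zero_add]

theorem HstarAux_cons_smul (N a : ℕ) (l : List ℕ) (u v : A) :
    HstarAux p N (a :: l) • (u * v) =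
      ∑ m ∈ Ico 1 N, ((m : ZMod p)⁻¹ ^ a • u) * (HstarAux p (m + 1) l • v) := by
  simp only [HstarAux, sum_smul, smul_mul_smul_comm, ← Ico_add_one_left_eq_Ioo, zero_add]

theorem strictSeries_eq_one_add_sum (w : ℕ → A) (N : ℕ) :
    strictSeries p w N =
      1 + ∑ m ∈ Ico 1 N, partSeries w (m : ZMod p)⁻¹ * strictSeries p w m := by
  have h := compositionSeries_eq_C_add_sum (f := fun l => HAux p N l • (l.map w).prod) (Ico 1 N) w
    (fun m => (m : ZMod p)⁻¹) (fun m l => HAux p m l • (l.map w).prod)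
    fun a l => by simp only [List.map_cons, List.prod_cons, HAux_cons_smul]
  simpa only [HAux, List.map_nil, List.prod_nil, one_smul, map_one] using! h

theorem starSeries_eq_one_add_sum (w : ℕ → A) (N : ℕ) :
    starSeries p w N =
      1 + ∑ m ∈ Ico 1 N, partSeries w (m : ZMod p)⁻¹ * starSeries p w (m + 1) := by
  have h := compositionSeries_eq_C_add_sum (f := fun l => HstarAux p N l • (l.map w).prod)
    (Ico 1 N) w (fun m => (m : ZMod p)⁻¹) (fun m l => HstarAux p (m + 1) l • (l.map w).prod)
    fun a l => by simp only [List.map_cons, List.prod_cons, HstarAux_cons_smul]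
  simpa only [HstarAux, List.map_nil, List.prod_nil, one_smul, map_one] using! h

theorem compositionSeries_HAux_headWeight (w' w : ℕ → A) (N : ℕ) :
    compositionSeries (fun l => HAux p N l • headWeight w' w l) =
      ∑ m ∈ Ico 1 N, partSeries w' (m : ZMod p)⁻¹ * strictSeries p w m := by
  have h := compositionSeries_eq_C_add_sum (f := fun l => HAux p N l • headWeight w' w l)
    (Ico 1 N) w' (fun m => (m : ZMod p)⁻¹) (fun m l => HAux p m l • (l.map w).prod)
    fun a l => by simp only [headWeight, HAux_cons_smul]
  simpa only [headWeight, smul_zero, map_zero, zero_add] using! h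

theorem compositionSeries_HstarAux_headWeight (w' w : ℕ → A) (N : ℕ) :
    compositionSeries (fun l => HstarAux p N l • headWeight w' w l) =
      ∑ m ∈ Ico 1 N, partSeries w' (m : ZMod p)⁻¹ * starSeries p w (m + 1) := by
  have h := compositionSeries_eq_C_add_sum (f := fun l => HstarAux p N l • headWeight w' w l)
    (Ico 1 N) w' (fun m => (m : ZMod p)⁻¹) (fun m l => HstarAux p (m + 1) l • (l.map w).prod)
    fun a l => by simp only [headWeight, HstarAux_cons_smul]
  simpa only [headWeight, smul_zero, map_zero, zero_add] using! h

theorem strictSeries_eq_prod (w : ℕ → A) (N : ℕ) :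
    strictSeries p w N = ∏ m ∈ Ico 1 N, (1 + partSeries w (m : ZMod p)⁻¹) := by
  induction N with
  | zero =>
    rw [strictSeries_eq_one_add_sum]
    simp
  | succ N ih =>
    obtain rfl | hN := N.eq_zero_or_pos
    · rw [strictSeries_eq_one_add_sum]
      simp
    · rw [prod_Ico_succ_top hN, ← ih, strictSeries_eq_one_add_sum, sum_Ico_succ_top hN, ← add_assoc,
        ← strictSeries_eq_one_add_sum]
      ring

theorem starSeries_succ_mul_prod (w : ℕ → A) (N : ℕ) :
    starSeries p w (N + 1) * ∏ m ∈ Ico 1 (N + 1), (1 - partSeries w (m : ZMod p)⁻¹) = 1 := by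
  induction N with
  | zero =>
    rw [starSeries_eq_one_add_sum]
    simp
  | succ N ih =>
    have hN : 1 ≤ N + 1 := Nat.succ_pos N
    have hstep : starSeries p w (N + 1 + 1) * (1 - partSeries w ((N + 1 : ℕ) : ZMod p)⁻¹) =
        starSeries p w (N + 1) := by
      have h := starSeries_eq_one_add_sum (p := p) w (N + 1 + 1)
      rw [sum_Ico_succ_top hN, ← add_assoc, ← starSeries_eq_one_add_sum] at h
      linear_combination h
    rw [prod_Ico_succ_top hN, mul_left_comm, hstep, mul_comm, ih]

theorem prod_Ico_one_sub_partSeries_eq_starSeries_mul (w : ℕ → A) {m : ℕ} (hm : m < p) :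
    ∏ j ∈ Ico (m + 1) p, (1 - partSeries w (j : ZMod p)⁻¹) =
      starSeries p w (m + 1) * ∏ j ∈ Ico 1 p, (1 - partSeries w (j : ZMod p)⁻¹) := by
  rw [← prod_Ico_consecutive _ (Nat.succ_pos m) hm, ← mul_assoc, starSeries_succ_mul_prod, one_mul]

variable [Fact p.Prime]

theorem natCast_sub_inv {m : ℕ} (hm : m ≤ p) : ((p - m : ℕ) : ZMod p)⁻¹ = -(m : ZMod p)⁻¹ := by
  rw [Nat.cast_sub hm, CharP.cast_eq_zero, zero_sub, inv_neg]

theorem rescale_neg_one_strictSeries_neg (w : ℕ → A) {m : ℕ} (hm : m ≤ p) :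
    rescale (-1) (strictSeries p (-w) m) =
      ∏ j ∈ Ico (p - m + 1) p, (1 - partSeries w (j : ZMod p)⁻¹) := by
  have hreflect := prod_Ico_reflect (fun j => 1 - partSeries w (j : ZMod p)⁻¹) 1
    (hm.trans p.le_succ)
  rw [Nat.succ_sub hm, Nat.add_sub_cancel] at hreflect
  rw [strictSeries_eq_prod, map_prod, ← hreflect]
  refine prod_congr rfl fun j hj => ?_
  have hj : j ≤ p := (mem_Ico.1 hj).2.le.trans hm
  rw [partSeries_neg, natCast_sub_inv hj, map_add, map_one, map_neg, rescale_neg_one_partSeries,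
    sub_eq_add_neg]

theorem rescale_neg_one_compositionSeries_HAux (w' w : ℕ → A) :
    rescale (-1) (compositionSeries fun l => HAux p p l • headWeight (-w') (-w) l) =
      -((compositionSeries fun l => HstarAux p p l • headWeight w' w l) *
        ∏ j ∈ Ico 1 p, (1 - partSeries w (j : ZMod p)⁻¹)) := by
  set F : ℕ → A⟦X⟧ := fun m => partSeries w' (m : ZMod p)⁻¹ *
    ∏ j ∈ Ico (m + 1) p, (1 - partSeries w (j : ZMod p)⁻¹) with hF
  have hstrict : rescale (-1) (compositionSeries fun l => HAux p p l • headWeight (-w') (-w) l) =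
      -∑ m ∈ Ico 1 p, F (p - m) := by
    rw [compositionSeries_HAux_headWeight, map_sum, ← sum_neg_distrib]
    refine sum_congr rfl fun m hm => ?_
    have hm : m ≤ p := (mem_Ico.1 hm).2.le
    rw [map_mul, rescale_neg_one_strictSeries_neg w hm, partSeries_neg, map_neg,
      rescale_neg_one_partSeries, ← natCast_sub_inv hm, neg_mul]
  have hstar : (compositionSeries fun l => HstarAux p p l • headWeight w' w l) *
      ∏ j ∈ Ico 1 p, (1 - partSeries w (j : ZMod p)⁻¹) = ∑ m ∈ Ico 1 p, F m := by
    rw [compositionSeries_HstarAux_headWeight, sum_mul]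
    refine sum_congr rfl fun m hm => ?_
    rw [hF, mul_assoc, ← prod_Ico_one_sub_partSeries_eq_starSeries_mul w (mem_Ico.1 hm).2]
  have hreflect : ∑ m ∈ Ico 1 p, F (p - m) = ∑ m ∈ Ico 1 p, F m := by
    simpa using sum_Ico_reflect F 1 p.le_succ
  rw [hstrict, hstar, hreflect]

theorem prod_Ico_natCast_eq_prod_units {M : Type*} [CommMonoid M] (f : ZMod p → M) :
    ∏ m ∈ Ico 1 p, f m = ∏ x : (ZMod p)ˣ, f x := by
  symm
  refine prod_bij (fun x _ => (x : ZMod p).val) ?_ ?_ ?_ ?_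
  · exact fun x _ => mem_Ico.2 ⟨Nat.pos_of_ne_zero (by simp), ZMod.val_lt _⟩
  · exact fun x _ y _ h => Units.ext (ZMod.val_injective p h)
  · intro m hm
    obtain ⟨hm0, hmp⟩ := mem_Ico.1 hm
    have hne : (m : ZMod p) ≠ 0 := by
      rw [Ne, ZMod.natCast_eq_zero_iff]
      exact Nat.not_dvd_of_pos_of_lt hm0 hmp
    exact ⟨Units.mk0 _ hne, mem_univ _, ZMod.val_cast_of_lt hmp⟩
  · simp

theorem rescale_prod_one_sub_partSeries (w : ℕ → A) (a : (ZMod p)ˣ) :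
    rescale (algebraMap (ZMod p) A a) (∏ m ∈ Ico 1 p, (1 - partSeries w (m : ZMod p)⁻¹)) =
      ∏ m ∈ Ico 1 p, (1 - partSeries w (m : ZMod p)⁻¹) := by
  rw [prod_Ico_natCast_eq_prod_units fun x => 1 - partSeries w x⁻¹, map_prod]
  refine Fintype.prod_equiv (Equiv.mulLeft a⁻¹) _ _ fun x => ?_
  rw [map_sub, map_one, rescale_partSeries, Equiv.coe_mulLeft, Units.val_mul, mul_inv,
    Units.val_inv_eq_inv_val, inv_inv]

theorem X_pow_dvd_prod_one_sub_partSeries_sub_one (w : ℕ → A) :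
    (X : A⟦X⟧) ^ (p - 1) ∣ ∏ m ∈ Ico 1 p, (1 - partSeries w (m : ZMod p)⁻¹) - 1 := by
  rw [X_pow_dvd_iff]
  intro n hn
  obtain rfl | hn0 := eq_or_ne n 0
  · simp [partSeries, map_prod]
  have hcard : n < Nat.card (ZMod p)ˣ := by
    rwa [Nat.card_eq_fintype_card, ZMod.card_units]
  obtain ⟨a, ha⟩ := exists_pow_ne_one_of_isCyclic hn0 hcard
  have hunit : IsUnit (algebraMap (ZMod p) A ((a : ZMod p) ^ n - 1)) :=
    (IsUnit.mk0 _ (sub_ne_zero.2 fun h => ha (Units.ext (by simpa using h)))).map _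
  have hcoeff := congrArg (coeff n) (rescale_prod_one_sub_partSeries w a)
  rw [coeff_rescale] at hcoeff
  rw [map_sub, coeff_one, if_neg hn0, sub_zero, ← hunit.mul_right_eq_zero, map_sub, map_pow,
    map_one, sub_mul, one_mul, hcoeff, sub_self]

theorem coeff_mul_prod_one_sub_partSeries (f : A⟦X⟧) (w : ℕ → A) {k : ℕ} (hk : k < p - 1) :
    coeff k (f * ∏ m ∈ Ico 1 p, (1 - partSeries w (m : ZMod p)⁻¹)) = coeff k f := by
  have h := X_pow_dvd_iff.1 ((X_pow_dvd_prod_one_sub_partSeries_sub_one (p := p) w).mul_left f) k hk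
  rwa [mul_sub, mul_one, map_sub, sub_eq_zero] at h

theorem sum_Hps_smul_headWeight (w' w : ℕ → A) {k : ℕ} (hk : k < p - 1) :
    ∑ c : Composition k, Hps p c.blocks • headWeight w' w c.blocks =
      (-1) ^ (k + 1) *
        ∑ c : Composition k, ((-1) ^ c.length * Hp p c.blocks) • headWeight w' w c.blocks := by
  have h := congrArg (coeff k) (rescale_neg_one_compositionSeries_HAux (p := p) w' w)
  rw [map_neg, coeff_mul_prod_one_sub_partSeries _ _ hk, coeff_rescale] at h
  simp only [compositionSeries, coeff_mk, headWeight_neg, Composition.blocks_length] at h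
  have hsign (c : Composition k) : ((-1) ^ c.length * Hp p c.blocks) • headWeight w' w c.blocks =
      HAux p p c.blocks • ((-1) ^ c.length * headWeight w' w c.blocks) := by
    simp only [Hp, Algebra.smul_def, map_mul, map_pow, map_neg, map_one]
    ring
  simp only [hsign, Hps]
  rw [pow_succ, mul_neg_one, neg_mul, h, neg_neg]

end Harmonic

section Height

open Polynomial

variable {R : Type*} [CommRing R]

/-- The weight `X` for components greater than `1` and `c` for components equal to `1`, so that the
exponent of `X` counts the height; `c = 0` at the first component imposes `k₁ > 1`. -/
def heightWeight (c : R[X]) (n : ℕ) : R[X] :=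
  if 2 ≤ n then X else c

theorem prod_map_heightWeight_one (l : List ℕ) :
    (l.map (heightWeight (1 : R[X]))).prod = X ^ (l.filter fun x => 2 ≤ x).length := by
  induction l with
  | nil => simp
  | cons a l ih =>
    by_cases ha : 2 ≤ a
    · simp [ih, heightWeight, ha, pow_succ']
    · simp [ih, heightWeight, ha]

theorem headWeight_heightWeight (l : List ℕ) :
    headWeight (heightWeight (0 : R[X])) (heightWeight 1) l =
      if 2 ≤ l.headI then X ^ (l.filter fun x => 2 ≤ x).length else 0 := by
  cases l with
  | nil => simp [headWeight]
  | cons a l =>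
    by_cases ha : 2 ≤ a
    · simp [headWeight, prod_map_heightWeight_one, heightWeight, ha, pow_succ']
    · simp [headWeight, heightWeight, ha]

theorem coeff_sum_smul_headWeight_heightWeight (k s : ℕ) (f : Composition k → R) :
    (∑ c, f c • headWeight (heightWeight (0 : R[X])) (heightWeight 1) c.blocks).coeff s =
      ∑ c ∈ Izero k s, f c := by
  rw [finsetSum_coeff, Izero, sum_filter]
  refine sum_congr rfl fun c _ => ?_
  by_cases hhead : 2 ≤ c.blocks.headI
  · simp [headWeight_heightWeight, hhead, coeff_X_pow, eq_comm (a := s)]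
  · simp [headWeight_heightWeight, hhead]

end Height

end

/-- Lemma relating star and non-star sums:
`∑_{𝐤 ∈ I₀(k,s)} H_p^⋆(𝐤) = (-1)^{k-1} ∑_{𝐤 ∈ I₀(k,s)} (-1)^{dep 𝐤} H_p(𝐤)` in `ℤ/pℤ`
for all sufficiently large primes `p`. -/
theorem stmt_14 (k s : ℕ) (hk : 2 ≤ k) (hs : 1 ≤ s) (hks : 2 * s ≤ k) :
    ∃ N : ℕ, ∀ p : ℕ, N ≤ p → p.Prime →
      ∑ c ∈ Izero k s, Hps p c.blocks =
        (-1 : ZMod p) ^ (k - 1) *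
          ∑ c ∈ Izero k s, (-1 : ZMod p) ^ c.length * Hp p c.blocks := by
  refine ⟨k + 2, fun p hkp hp => ?_⟩
  have := Fact.mk hp
  have hweighted := sum_Hps_smul_headWeight (heightWeight (0 : Polynomial (ZMod p)))
    (heightWeight 1) (show k < p - 1 by lia)
  have hcoeff := congrArg (Polynomial.coeff · s) hweighted
  have hsign : (-1 : Polynomial (ZMod p)) ^ (k + 1) = Polynomial.C ((-1) ^ (k - 1)) := by
    rw [show k + 1 = k - 1 + 2 by lia, pow_add, neg_one_sq, mul_one]
    simp
  rwa [hsign, Polynomial.coeff_C_mul, coeff_sum_smul_headWeight_heightWeight,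
    coeff_sum_smul_headWeight_heightWeight] at hcoeff
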